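/- Let S = {(x,y) ∈ ℝ² : −π/2 < x < π/2} be an infinite strip. For every constant C ≥ 0, the function h(x,y) = π²/4 − x² + C·e^{y}·cos x satisfies: (1) Δh = ∂²h/∂x² + ∂²h/∂y² = −2 on S; (2) h = 0 on the boundary ∂S = {(x,y) : x = ±π/2}; and (3) h > 0 on S. In particular, the boundary value problem Δh = −2 with zero boundary values on the unbounded domain S admits infinitely many positive solutions, one for each C ≥ 0, so conditions (i) and (ii) alone do not determine the expected exit time. -/

import Mathlib

open scoped Real

noncomputable section

/-!
The torsion problem is linear, so uniqueness fails as soon as the domain carries a nonzero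
nonnegative harmonic function vanishing on its boundary. On the strip `e ^ y * cos x` is one: its
factors have second derivatives `e ^ y` and `-cos x`, and `cos` is positive between its zeros
`±π / 2`. Adding nonnegative multiples of it to the one-dimensional solution `π ^ 2 / 4 - x ^ 2`
preserves the equation, the boundary values and positivity.
-/

variable {𝕜 F : Type*} [NontriviallyNormedField 𝕜] [NormedAddCommGroup F] [NormedSpace 𝕜 F]
  {𝕜' : Type*} [NormedDivisionRing 𝕜'] [NormedAlgebra 𝕜 𝕜']

/-- The Laplacian of a function of two variables in curried form, as the sum of its two pure second
partial derivatives. Each of them differentiates along a coordinate line only, so the value is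
meaningful as soon as the restrictions of `u` to the two lines through `(x, y)` are twice
differentiable; otherwise `deriv` may contribute junk values. -/
def planarLaplacian (u : 𝕜 → 𝕜 → F) (x y : 𝕜) : F :=
  deriv (deriv fun s => u s y) x + deriv (deriv fun t => u x t) y

theorem planarLaplacian_add {u v : 𝕜 → 𝕜 → F} {x y : 𝕜}
    (hux : ContDiffAt 𝕜 2 (fun s => u s y) x) (huy : ContDiffAt 𝕜 2 (u x) y)
    (hvx : ContDiffAt 𝕜 2 (fun s => v s y) x) (hvy : ContDiffAt 𝕜 2 (v x) y) :
    planarLaplacian (fun s t => u s t + v s t) x y =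
      planarLaplacian u x y + planarLaplacian v x y := by
  have deriv_deriv_add {f g : 𝕜 → F} {a : 𝕜} (hf : ContDiffAt 𝕜 2 f a)
      (hg : ContDiffAt 𝕜 2 g a) :
      deriv (deriv fun s => f s + g s) a = deriv (deriv f) a + deriv (deriv g) a := by
    simpa only [iteratedDeriv_succ, iteratedDeriv_zero] using iteratedDeriv_fun_add hf hg
  simp only [planarLaplacian, deriv_deriv_add hux hvx, deriv_deriv_add huy hvy]
  exact add_add_add_comm ..

theorem planarLaplacian_const_mul (c : 𝕜') (u : 𝕜 → 𝕜 → 𝕜') (x y : 𝕜) :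
    planarLaplacian (fun s t => c * u s t) x y = c * planarLaplacian u x y := by
  simp only [planarLaplacian, deriv_const_mul_field', mul_add]

theorem planarLaplacian_comp_fst (f : 𝕜 → F) (x y : 𝕜) :
    planarLaplacian (fun s _ => f s) x y = deriv (deriv f) x := by
  simp only [planarLaplacian, deriv_const', deriv_const, add_zero]

theorem planarLaplacian_snd_mul_fst (f g : 𝕜 → 𝕜') (x y : 𝕜) :
    planarLaplacian (fun s t => f t * g s) x y =
      f y * deriv (deriv g) x + deriv (deriv f) y * g x := by
  simp only [planarLaplacian, deriv_const_mul_field', deriv_mul_const_field']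

theorem deriv_deriv_const_sub_sq (a x : 𝕜) : deriv (deriv fun s : 𝕜 => a - s ^ 2) x = -2 := by
  have deriv_eq : (deriv fun s : 𝕜 => a - s ^ 2) = fun s => -2 * s := by
    funext s
    simp
  rw [deriv_eq, deriv_const_mul_field, deriv_id'', mul_one]

theorem planarLaplacian_exp_mul_cos (x y : ℝ) :
    planarLaplacian (fun s t => Real.exp t * Real.cos s) x y = 0 := by
  simp only [planarLaplacian_snd_mul_fst, Real.deriv_exp, Real.deriv_cos', deriv.fun_neg,
    Real.deriv_sin, mul_neg, neg_add_cancel]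

theorem planarLaplacian_const_sub_sq_add_exp_mul_cos (a C x y : ℝ) :
    planarLaplacian (fun s t => a - s ^ 2 + C * Real.exp t * Real.cos s) x y = -2 := by
  simp only [mul_assoc C]
  rw [planarLaplacian_add (by fun_prop) (by fun_prop) (by fun_prop) (by fun_prop),
    planarLaplacian_comp_fst (fun s => a - s ^ 2), deriv_deriv_const_sub_sq,
    planarLaplacian_const_mul, planarLaplacian_exp_mul_cos, mul_zero, add_zero]

/-- On the strip `S = {(x,y) : -π/2 < x < π/2}`, for every `C ≥ 0`
the function `h(x,y) = π²/4 - x² + C e^y cos x` satisfies `Δh = -2` on `S`, vanishes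
on the boundary lines `x = ±π/2`, and is positive on `S`. Hence the problem
`Δh = -2`, `h = 0` on `∂S`, `h > 0`, admits infinitely many solutions on this
unbounded domain, so these conditions alone do not determine the expected exit time. -/
theorem strip_torsion_nonuniqueness (C : ℝ) (hC : 0 ≤ C)
    (h : ℝ → ℝ → ℝ)
    (hdef : ∀ x y : ℝ,
      h x y = π ^ 2 / 4 - x ^ 2 + C * Real.exp y * Real.cos x) :
    (∀ x y : ℝ, -(π / 2) < x → x < π / 2 →
      deriv (deriv (fun x' => h x' y)) x + deriv (deriv (fun y' => h x y')) y = -2) ∧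
    (∀ y : ℝ, h (π / 2) y = 0 ∧ h (-(π / 2)) y = 0) ∧
    (∀ x y : ℝ, -(π / 2) < x → x < π / 2 → 0 < h x y) := by
  have h_eq : h = fun x y => π ^ 2 / 4 - x ^ 2 + C * Real.exp y * Real.cos x := funext₂ hdef
  refine ⟨fun x y _ _ => ?_, fun y => ⟨?_, ?_⟩, fun x y hleft hright => ?_⟩
  · rw [h_eq]
    exact planarLaplacian_const_sub_sq_add_exp_mul_cos (π ^ 2 / 4) C x y
  · rw [hdef, Real.cos_pi_div_two]
    ring
  · rw [hdef, Real.cos_neg, Real.cos_pi_div_two]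
    ring
  · have parabola_pos : 0 < π ^ 2 / 4 - x ^ 2 := by linarith [sq_lt_sq' hleft hright]
    have cos_pos : 0 < Real.cos x := Real.cos_pos_of_mem_Ioo ⟨hleft, hright⟩
    rw [hdef]
    positivity
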